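/- arXiv:2406.04715 — 2 statements merged into one kernel-verified Lean document; each statement's English description precedes it below -/
import Mathlib

section
/- Let t ∈ ℂ and let σ̃_t be the automorphism of SL(2,ℂ) given by σ̃_t(B) = A_t⁻¹ B A_t. Then (SL(2,ℂ), H̃_t, σ̃_t) is a quandle triplet, and the map φ : Q(SL(2,ℂ), H̃_t, σ̃_t) → Conj(X̃_t) defined by φ(H̃_t g) = g⁻¹ A_t g is a well-defined bijection satisfying φ(H̃_t x ◁ H̃_t y) = φ(H̃_t y)⁻¹ · φ(H̃_t x) · φ(H̃_t y); hence Conj(X̃_t) is isomorphic as a quandle to Q(SL(2,ℂ), H̃_t, σ̃_t). -/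
/-!
For every `t`, the set `X̃_t` is a single conjugacy class of `SL(2,ℂ)`: an `A ≠ ±I` in `SL(2,ℂ)`
is not scalar, so it has a cyclic row vector `v`, and in the basis `v, vA` (rescaled to have
determinant `1`, using a square root in `ℂ`) it becomes the companion matrix of `X² - tX + 1`
(`exists_conj_companion`). Moreover `H̃_t` is exactly the centralizer of `A_t`
(`mem_HparSL_iff`, `mem_HdiagSL_iff`). The theorem is then the orbit-stabilizer bijection for the
conjugation action, and compatibility with the quandle operations is a computation in the group
(`orbit_presentation`).
-/

open Matrix

abbrev SL2C := Matrix.SpecialLinearGroup (Fin 2) ℂ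

/-- `X̃_t`: the set of elements of `SL(2,ℂ)` of trace `t`, other than `±I`. -/
def XtSL (t : ℂ) : Set SL2C :=
  {A | Matrix.trace (A : Matrix (Fin 2) (Fin 2) ℂ) = t ∧
    (A : Matrix (Fin 2) (Fin 2) ℂ) ≠ 1 ∧ (A : Matrix (Fin 2) (Fin 2) ℂ) ≠ -1}

/-- `H̃_{±2}`: the elements `ε'·[[1,μ],[0,1]]` of `SL(2,ℂ)`, `ε' ∈ {1,−1}`, `μ ∈ ℂ`. -/
def HparSL : Set SL2C :=
  {B | ∃ ε μ : ℂ, (ε = 1 ∨ ε = -1) ∧ (B : Matrix (Fin 2) (Fin 2) ℂ) = !![ε, μ; 0, ε]}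

/-- `H̃_t` (`t ≠ ±2`): the diagonal matrices `[[μ,0],[0,μ⁻¹]]`, `μ ∈ ℂ*`. -/
def HdiagSL : Set SL2C :=
  {B | ∃ μ : ℂ, μ ≠ 0 ∧ (B : Matrix (Fin 2) (Fin 2) ℂ) = !![μ, 0; 0, μ⁻¹]}

/-- Orbit-stabilizer for conjugation, as quandles: if `H` is the centralizer of `A` and `X` its
conjugacy class, then `Hg ↦ g⁻¹Ag` is an isomorphism from `Q(G, H, A⁻¹ · A)` to `Conj(X)`. -/
lemma orbit_presentation {G : Type*} [Group G] (A : G) (H : Subgroup G) (X : Set G)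
    (hH : ∀ h, h ∈ H ↔ h * A = A * h) (hX : ∀ B, B ∈ X ↔ ∃ g, g⁻¹ * A * g = B) :
    (∀ h ∈ H, A⁻¹ * h * A = h) ∧
      ∃ φ : Quotient (QuotientGroup.rightRel H) → ↥X,
        (∀ g : G, (φ (Quotient.mk (QuotientGroup.rightRel H) g) : G) = g⁻¹ * A * g) ∧
        Function.Bijective φ ∧
        (∀ x y : G,
          (φ (Quotient.mk (QuotientGroup.rightRel H) (A⁻¹ * (x * y⁻¹) * A * y)) : G)
            = (φ (Quotient.mk (QuotientGroup.rightRel H) y) : G)⁻¹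
              * (φ (Quotient.mk (QuotientGroup.rightRel H) x) : G)
              * (φ (Quotient.mk (QuotientGroup.rightRel H) y) : G)) := by
  have key : ∀ x y : G, (QuotientGroup.rightRel H) x y ↔ x⁻¹ * A * x = y⁻¹ * A * y := by
    intro x y
    rw [QuotientGroup.rightRel_apply, hH]
    constructor
    · intro h
      calc x⁻¹ * A * x = y⁻¹ * (y * x⁻¹ * A) * x := by group
        _ = y⁻¹ * A * y := by rw [h]; group
    · intro h
      calc y * x⁻¹ * A = y * (x⁻¹ * A * x) * x⁻¹ := by group
        _ = A * (y * x⁻¹) := by rw [h]; group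
  refine ⟨fun h hh => ?_, ?_⟩
  · rw [mul_assoc, (hH h).1 hh]; group
  refine ⟨Quotient.lift (fun g => (⟨g⁻¹ * A * g, (hX _).2 ⟨g, rfl⟩⟩ : ↥X))
    (fun x y h => Subtype.ext ((key x y).1 h)), fun g => rfl, ⟨?_, ?_⟩, fun x y => ?_⟩
  · intro p q
    induction p using Quotient.inductionOn
    induction q using Quotient.inductionOn
    intro h
    exact Quotient.sound ((key _ _).2 (congrArg Subtype.val h))
  · rintro ⟨B, hB⟩
    obtain ⟨g, rfl⟩ := (hX B).1 hB
    exact ⟨Quotient.mk _ g, rfl⟩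
  · simp only [Quotient.lift_mk]
    group

/-- The companion matrix of `X² - tX + 1`. -/
def companionSL (t : ℂ) : SL2C := ⟨!![0, 1; -1, t], by simp [Matrix.det_fin_two]⟩

/-- Every element of `X̃_t` is conjugate to the companion matrix of `X² - tX + 1`. -/
lemma exists_conj_companion {t : ℂ} {A : SL2C} (hA : A ∈ XtSL t) :
    ∃ g : SL2C, g * A = companionSL t * g := by
  obtain ⟨htr, h1, h2⟩ := hA
  have hdet := A.det_coe
  obtain ⟨a, b, c, d, hM⟩ : ∃ a b c d, (A : Matrix (Fin 2) (Fin 2) ℂ) = !![a, b; c, d] :=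
    ⟨_, _, _, _, Matrix.eta_fin_two _⟩
  rw [hM] at htr h1 h2 hdet
  rw [Matrix.det_fin_two_of] at hdet
  rw [Matrix.trace_fin_two_of] at htr
  -- The quadratic form is `det (v, vA)` for `v = (x, y)`; it vanishes identically only for
  -- scalar `A`.
  obtain ⟨x, y, hq⟩ : ∃ x y : ℂ, b * x ^ 2 + (d - a) * x * y - c * y ^ 2 ≠ 0 := by
    by_contra! hq
    have hb : b = 0 := by simpa using hq 1 0
    have hc : c = 0 := by simpa using hq 0 1
    have hd : d = a := by
      have := hq 1 1
      rw [hb, hc] at this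
      linear_combination this
    subst hb hc hd
    have : (d - 1) * (d + 1) = 0 := by linear_combination hdet
    rcases mul_eq_zero.1 this with h | h
    · apply h1
      rw [sub_eq_zero.1 h, Matrix.one_fin_two]
    · apply h2
      rw [eq_neg_of_add_eq_zero_left h, Matrix.one_fin_two]
      simp
  obtain ⟨s, hs⟩ := IsAlgClosed.exists_eq_mul_self (b * x ^ 2 + (d - a) * x * y - c * y ^ 2)⁻¹
  refine ⟨⟨!![s * x, s * y; s * (x * a + y * c), s * (x * b + y * d)], ?_⟩, ?_⟩
  · rw [Matrix.det_fin_two_of]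
    have h := inv_mul_cancel₀ hq
    rw [hs] at h
    linear_combination h
  · apply Subtype.ext
    subst htr
    change !![s * x, s * y; s * (x * a + y * c), s * (x * b + y * d)]
      * (A : Matrix (Fin 2) (Fin 2) ℂ)
      = !![0, 1; -1, a + d] * !![s * x, s * y; s * (x * a + y * c), s * (x * b + y * d)]
    rw [hM, Matrix.mul_fin_two, Matrix.mul_fin_two]
    ext i j
    fin_cases i <;> fin_cases j <;> simp
    · ring
    · ring
    · linear_combination (-s * x) * hdet
    · linear_combination (-s * y) * hdet

/-- `X̃_t` is the conjugacy class of any of its elements. -/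
lemma mem_XtSL_iff {t : ℂ} {A : SL2C} (hA : A ∈ XtSL t) (B : SL2C) :
    B ∈ XtSL t ↔ ∃ g : SL2C, g⁻¹ * A * g = B := by
  constructor
  · intro hB
    obtain ⟨g, hg⟩ := exists_conj_companion hA
    obtain ⟨k, hk⟩ := exists_conj_companion hB
    refine ⟨g⁻¹ * k, ?_⟩
    have h : companionSL t = g * A * g⁻¹ := by rw [hg]; group
    rw [h] at hk
    calc (g⁻¹ * k)⁻¹ * A * (g⁻¹ * k) = k⁻¹ * (g * A * g⁻¹ * k) := by group
      _ = B := by rw [← hk]; group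
  · rintro ⟨g, rfl⟩
    obtain ⟨htr, h1, h2⟩ := hA
    have hA1 : A ≠ 1 := fun h => h1 (by rw [h]; rfl)
    have hA2 : A ≠ -1 := fun h => h2 (by rw [h]; simp)
    refine ⟨?_, fun h => hA1 ?_, fun h => hA2 ?_⟩
    · rw [← htr, Matrix.SpecialLinearGroup.coe_mul, Matrix.trace_mul_comm,
        ← Matrix.SpecialLinearGroup.coe_mul]
      rw [show g * (g⁻¹ * A) = A by group]
    · have h' : g⁻¹ * A * g = 1 := Subtype.ext h
      calc A = g * (g⁻¹ * A * g) * g⁻¹ := by group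
        _ = 1 := by rw [h']; group
    · have h' : g⁻¹ * A * g = -1 := Subtype.ext (by rw [h]; simp)
      calc A = g * (g⁻¹ * A * g) * g⁻¹ := by group
        _ = -1 := by rw [h']; simp

lemma mem_HparSL_iff {ε : ℂ} {A : SL2C}
    (hA : (A : Matrix (Fin 2) (Fin 2) ℂ) = !![ε, 1; 0, ε]) (B : SL2C) :
    B ∈ HparSL ↔ B * A = A * B := by
  have hdet := B.det_coe
  obtain ⟨a, b, c, d, hM⟩ : ∃ a b c d, (B : Matrix (Fin 2) (Fin 2) ℂ) = !![a, b; c, d] :=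
    ⟨_, _, _, _, Matrix.eta_fin_two _⟩
  rw [hM, Matrix.det_fin_two_of] at hdet
  have hcomm : B * A = A * B ↔ c = 0 ∧ a = d := by
    refine Subtype.ext_iff.trans ?_
    change (B : Matrix (Fin 2) (Fin 2) ℂ) * (A : Matrix (Fin 2) (Fin 2) ℂ)
      = (A : Matrix (Fin 2) (Fin 2) ℂ) * (B : Matrix (Fin 2) (Fin 2) ℂ) ↔ _
    simp only [hM, hA, Matrix.mul_fin_two]
    rw [← Matrix.ext_iff]
    simp only [Fin.forall_fin_two]
    simp
    constructor
    · rintro ⟨⟨h1, h2⟩, h3, h4⟩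
      exact ⟨by linear_combination -h1, by linear_combination h2⟩
    · rintro ⟨rfl, rfl⟩
      refine ⟨⟨?_, ?_⟩, ?_, ?_⟩ <;> ring
  rw [hcomm]
  constructor
  · rintro ⟨e, μ, -, h⟩
    rw [hM] at h
    have h00 := congrFun (congrFun h 0) 0
    have h10 := congrFun (congrFun h 1) 0
    have h11 := congrFun (congrFun h 1) 1
    simp at h00 h10 h11
    exact ⟨h10, h00.trans h11.symm⟩
  · rintro ⟨rfl, rfl⟩
    exact ⟨a, b, mul_self_eq_one_iff.1 (by linear_combination hdet), hM⟩

lemma mem_HdiagSL_iff {lam : ℂ} (hlam : lam ≠ lam⁻¹) {A : SL2C}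
    (hA : (A : Matrix (Fin 2) (Fin 2) ℂ) = !![lam, 0; 0, lam⁻¹]) (B : SL2C) :
    B ∈ HdiagSL ↔ B * A = A * B := by
  have hdet := B.det_coe
  obtain ⟨a, b, c, d, hM⟩ : ∃ a b c d, (B : Matrix (Fin 2) (Fin 2) ℂ) = !![a, b; c, d] :=
    ⟨_, _, _, _, Matrix.eta_fin_two _⟩
  rw [hM, Matrix.det_fin_two_of] at hdet
  have hcomm : B * A = A * B ↔ b = 0 ∧ c = 0 := by
    refine Subtype.ext_iff.trans ?_
    change (B : Matrix (Fin 2) (Fin 2) ℂ) * (A : Matrix (Fin 2) (Fin 2) ℂ)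
      = (A : Matrix (Fin 2) (Fin 2) ℂ) * (B : Matrix (Fin 2) (Fin 2) ℂ) ↔ _
    simp only [hM, hA, Matrix.mul_fin_two]
    rw [← Matrix.ext_iff]
    simp only [Fin.forall_fin_two, Matrix.of_apply, Matrix.cons_val_zero, Matrix.cons_val_one]
    have hne := sub_ne_zero.2 hlam
    constructor
    · rintro ⟨⟨h1, h2⟩, h3, h4⟩
      exact ⟨(mul_eq_zero.1 (by linear_combination -h2 : (lam - lam⁻¹) * b = 0)).resolve_left hne,
        (mul_eq_zero.1 (by linear_combination h3 : (lam - lam⁻¹) * c = 0)).resolve_left hne⟩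
    · rintro ⟨rfl, rfl⟩
      refine ⟨⟨?_, ?_⟩, ?_, ?_⟩ <;> ring
  rw [hcomm]
  constructor
  · rintro ⟨μ, -, h⟩
    rw [hM] at h
    have h01 := congrFun (congrFun h 0) 1
    have h10 := congrFun (congrFun h 1) 0
    simp at h01 h10
    exact ⟨h01, h10⟩
  · rintro ⟨rfl, rfl⟩
    have had : a * d = 1 := by linear_combination hdet
    exact ⟨a, left_ne_zero_of_mul_eq_one had, by rw [hM, eq_inv_of_mul_eq_one_right had]⟩

/-- `(SL(2,ℂ), H̃_t, σ̃_t)`, where `σ̃_t(B) = A_t⁻¹ B A_t`, is a quandle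
triplet (every element of `H̃_t` is fixed by `σ̃_t`), and
`φ : Q(SL(2,ℂ), H̃_t, σ̃_t) → Conj(X̃_t)`, `φ(H̃_t g) = g⁻¹ A_t g`, is a well-defined
bijection with `φ(H̃_t x ◁ H̃_t y) = φ(H̃_t y)⁻¹ · φ(H̃_t x) · φ(H̃_t y)`; hence
`Conj(X̃_t)` is isomorphic to `Q(SL(2,ℂ), H̃_t, σ̃_t)` as a quandle. -/
theorem quandle_triplet_presentation_of_Xt :
    (∀ ε : ℂ, (ε = 1 ∨ ε = -1) → ∀ At : SL2C,
      (At : Matrix (Fin 2) (Fin 2) ℂ) = !![ε, 1; 0, ε] →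
      ∀ H : Subgroup SL2C, (H : Set SL2C) = HparSL →
      (∀ h ∈ H, At⁻¹ * h * At = h) ∧
      ∃ φ : Quotient (QuotientGroup.rightRel H) → ↥(XtSL (2 * ε)),
        (∀ g : SL2C, (φ (Quotient.mk (QuotientGroup.rightRel H) g) : SL2C)
          = g⁻¹ * At * g) ∧
        Function.Bijective φ ∧
        (∀ x y : SL2C,
          (φ (Quotient.mk (QuotientGroup.rightRel H) (At⁻¹ * (x * y⁻¹) * At * y)) : SL2C)
            = (φ (Quotient.mk (QuotientGroup.rightRel H) y) : SL2C)⁻¹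
              * (φ (Quotient.mk (QuotientGroup.rightRel H) x) : SL2C)
              * (φ (Quotient.mk (QuotientGroup.rightRel H) y) : SL2C))) ∧
    (∀ t lam : ℂ, t ≠ 2 → t ≠ -2 → lam ≠ 0 → lam + lam⁻¹ = t →
      ∀ At : SL2C, (At : Matrix (Fin 2) (Fin 2) ℂ) = !![lam, 0; 0, lam⁻¹] →
      ∀ H : Subgroup SL2C, (H : Set SL2C) = HdiagSL →
      (∀ h ∈ H, At⁻¹ * h * At = h) ∧
      ∃ φ : Quotient (QuotientGroup.rightRel H) → ↥(XtSL t),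
        (∀ g : SL2C, (φ (Quotient.mk (QuotientGroup.rightRel H) g) : SL2C)
          = g⁻¹ * At * g) ∧
        Function.Bijective φ ∧
        (∀ x y : SL2C,
          (φ (Quotient.mk (QuotientGroup.rightRel H) (At⁻¹ * (x * y⁻¹) * At * y)) : SL2C)
            = (φ (Quotient.mk (QuotientGroup.rightRel H) y) : SL2C)⁻¹
              * (φ (Quotient.mk (QuotientGroup.rightRel H) x) : SL2C)
              * (φ (Quotient.mk (QuotientGroup.rightRel H) y) : SL2C))) := by
  refine ⟨?_, ?_⟩
  · intro ε _ A hA H hH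
    refine orbit_presentation A H _ (fun h => ?_) (mem_XtSL_iff ⟨?_, fun h => ?_, fun h => ?_⟩)
    · rw [← mem_HparSL_iff hA, ← hH, SetLike.mem_coe]
    · rw [hA, Matrix.trace_fin_two_of]
      ring
    · rw [hA] at h
      simpa using congrFun (congrFun h 0) 1
    · rw [hA] at h
      simpa using congrFun (congrFun h 0) 1
  · intro t lam ht2 htneg h0 hl A hA H hH
    -- `lam = lam⁻¹` would force `lam = ±1`, hence `t = ±2`.
    have hlam : lam ≠ lam⁻¹ := by
      intro h
      have hsq : lam * lam = 1 := by
        nth_rewrite 2 [h]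
        exact mul_inv_cancel₀ h0
      rcases mul_self_eq_one_iff.1 hsq with rfl | rfl
      · exact ht2 (by rw [← hl]; norm_num)
      · exact htneg (by rw [← hl]; norm_num)
    refine orbit_presentation A H _ (fun h => ?_) (mem_XtSL_iff ⟨?_, fun h => ?_, fun h => ?_⟩)
    · rw [← mem_HdiagSL_iff hlam hA, ← hH, SetLike.mem_coe]
    · rw [hA, Matrix.trace_fin_two_of, hl]
    · rw [hA] at h
      have h00 : lam = 1 := by simpa using congrFun (congrFun h 0) 0
      exact hlam (by rw [h00]; norm_num)
    · rw [hA] at h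
      have h00 : lam = -1 := by simpa using congrFun (congrFun h 0) 0
      exact hlam (by rw [h00]; norm_num)
end

section
/- Let τ ∈ 𝒯. Give PSL(2,ℂ) the quotient topology from SL(2,ℂ) (topologized as a subspace of the 2×2 complex matrices), give X_τ the subspace topology, and give the set H_τ\PSL(2,ℂ) of right cosets (the quotient of PSL(2,ℂ) by the relation x ∼ y ⇔ xy⁻¹ ∈ H_τ) the quotient topology. Then the map F : H_τ\PSL(2,ℂ) → X_τ defined by F(H_τ g) = g⁻¹ f_τ g is a well-defined homeomorphism. -/
/-!
`PSL(2,ℂ)` acts on `X_τ` by conjugation, and `F` is the orbit map of `f_τ` (precomposed with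
inversion) read on the coset space. So three facts are needed.

* Transitivity: a nontrivial matrix of trace `t` is conjugate to the chosen representative of `f_τ`
  (`exists_conj_unipotent`, `exists_conj_diagonal`); a conjugating matrix over `ℂ` can be rescaled
  to determinant one (`exists_SL2C_conj`), and a lift of trace `-t` is replaced by its negative.
* The stabilizer of `f_τ` is `H_τ`: it consists of the classes of matrices that commute or
  anticommute with the representative; anticommuting ones exist only when `t = 0`.
* Openness of the orbit map: `PSL(2,ℂ)` is a σ-compact group, and `X_τ`, being locally closed in a
  locally compact Hausdorff space, is a Baire space, so the open mapping theorem for transitive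
  group actions (`isOpenMap_smul_of_sigmaCompact`) applies; see `exists_homeomorph_of_transitive`.
-/

open Matrix

/-- `PSL(2,ℂ) = SL(2,ℂ)/{±I}` (the center of `SL(2,ℂ)` is `{±I}`). -/
abbrev PSL2C := Matrix.ProjectiveSpecialLinearGroup (Fin 2) ℂ

/-- The subspace topology on `SL(2,ℂ)` from the `2×2` complex matrices;
`PSL(2,ℂ)` then carries the quotient topology. -/
noncomputable instance : TopologicalSpace SL2C :=
  TopologicalSpace.induced (fun A => (A : Matrix (Fin 2) (Fin 2) ℂ)) inferInstance

/-- The projection `π : SL(2,ℂ) → PSL(2,ℂ)`. -/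
def prSL : SL2C →* PSL2C := QuotientGroup.mk' (Subgroup.center SL2C)

/-- `X_τ` for `τ = [t]`: the nontrivial elements of `PSL(2,ℂ)` admitting a lift of
trace `t` or `−t`. -/
def XtauP (t : ℂ) : Set PSL2C :=
  {f | f ≠ 1 ∧ ∃ A : SL2C, prSL A = f ∧
    (Matrix.trace (A : Matrix (Fin 2) (Fin 2) ℂ) = t ∨
     Matrix.trace (A : Matrix (Fin 2) (Fin 2) ℂ) = -t)}

/-- `H_[2]`: the image in `PSL(2,ℂ)` of the upper unitriangular matrices. -/
def HparP : Set PSL2C :=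
  {f | ∃ B : SL2C, prSL B = f ∧ ∃ v : ℂ, (B : Matrix (Fin 2) (Fin 2) ℂ) = !![1, v; 0, 1]}

/-- `H_τ` for `τ ∉ {[0],[2]}`: the image in `PSL(2,ℂ)` of the diagonal matrices. -/
def HdiagP : Set PSL2C :=
  {f | ∃ B : SL2C, prSL B = f ∧
    ∃ μ : ℂ, μ ≠ 0 ∧ (B : Matrix (Fin 2) (Fin 2) ℂ) = !![μ, 0; 0, μ⁻¹]}

/-- `H_[0]`: the image in `PSL(2,ℂ)` of the diagonal and antidiagonal matrices. -/
def HzeroP : Set PSL2C :=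
  HdiagP ∪ {f | ∃ B : SL2C, prSL B = f ∧
    ∃ μ : ℂ, μ ≠ 0 ∧ (B : Matrix (Fin 2) (Fin 2) ℂ) = !![0, μ; -μ⁻¹, 0]}

/-! ### Topology of `SL(2,ℂ)` and `PSL(2,ℂ)` -/

instance isTopologicalGroup_SL2C : IsTopologicalGroup SL2C :=
  Matrix.SpecialLinearGroup.topologicalGroup (n := Fin 2) (R := ℂ)

lemma isClosedEmbedding_coe_SL2C :
    Topology.IsClosedEmbedding (fun A : SL2C => (A : Matrix (Fin 2) (Fin 2) ℂ)) := by
  refine ⟨⟨⟨rfl⟩, Subtype.val_injective⟩, ?_⟩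
  have h : Set.range (fun A : SL2C => (A : Matrix (Fin 2) (Fin 2) ℂ)) = {M | M.det = 1} := by
    ext M
    exact ⟨fun ⟨A, hA⟩ => hA ▸ A.2, fun hM => ⟨⟨M, hM⟩, rfl⟩⟩
  rw [h]
  exact isClosed_eq (by fun_prop) continuous_const

instance t2Space_SL2C : T2Space SL2C := isClosedEmbedding_coe_SL2C.isEmbedding.t2Space

instance locallyCompactSpace_SL2C : LocallyCompactSpace SL2C :=
  haveI : LocallyCompactSpace (Matrix (Fin 2) (Fin 2) ℂ) :=
    inferInstanceAs (LocallyCompactSpace (Fin 2 → Fin 2 → ℂ))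
  isClosedEmbedding_coe_SL2C.locallyCompactSpace

instance sigmaCompactSpace_SL2C : SigmaCompactSpace SL2C :=
  haveI : SigmaCompactSpace (Matrix (Fin 2) (Fin 2) ℂ) :=
    inferInstanceAs (SigmaCompactSpace (Fin 2 → Fin 2 → ℂ))
  isClosedEmbedding_coe_SL2C.sigmaCompactSpace

lemma prSL_eq_iff (B C : SL2C) : prSL B = prSL C ↔ B = C ∨ B = -C := by
  have h : prSL B = prSL C ↔ B⁻¹ * C ∈ Subgroup.center SL2C := QuotientGroup.eq
  rw [h, Matrix.SpecialLinearGroup.mem_center_iff]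
  constructor
  · rintro ⟨r, hr, hrs⟩
    rw [Fintype.card_fin] at hr
    rcases (mul_self_eq_one_iff.mp (by rw [← hr, sq])) with rfl | rfl
    · left
      have : B⁻¹ * C = 1 := Subtype.ext (by rw [← hrs]; simp)
      rw [inv_mul_eq_one] at this
      exact this
    · right
      have : B⁻¹ * C = -1 := Subtype.ext (by
        rw [← hrs, Matrix.SpecialLinearGroup.coe_neg, map_neg, map_one,
          Matrix.SpecialLinearGroup.coe_one])
      rw [inv_mul_eq_iff_eq_mul] at this
      rw [this]; simp
  · rintro (rfl | rfl)
    · exact ⟨1, by simp, by simp⟩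
    · refine ⟨-1, by simp, ?_⟩
      have : (-C)⁻¹ * C = -1 := by rw [inv_mul_eq_iff_eq_mul]; simp
      rw [this, Matrix.SpecialLinearGroup.coe_neg, map_neg, map_one,
        Matrix.SpecialLinearGroup.coe_one]

lemma prSL_surjective : Function.Surjective prSL := QuotientGroup.mk'_surjective _

lemma isQuotientMap_prSL : Topology.IsQuotientMap prSL := QuotientGroup.isQuotientMap_mk _

instance isClosed_center_SL2C : IsClosed (Subgroup.center SL2C : Set SL2C) := by
  have h : (Subgroup.center SL2C : Set SL2C) = {1, -1} := by
    ext B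
    have h1 : B ∈ Subgroup.center SL2C ↔ prSL B = prSL 1 := by
      rw [map_one]; exact (QuotientGroup.eq_one_iff B).symm
    simp only [SetLike.mem_coe, h1, prSL_eq_iff, Set.mem_insert_iff, Set.mem_singleton_iff]
  rw [h]
  exact (Set.toFinite _).isClosed

instance sigmaCompactSpace_PSL2C : SigmaCompactSpace PSL2C := by
  refine ⟨?_⟩
  rw [← Set.range_eq_univ.mpr prSL_surjective]
  exact isSigmaCompact_range isQuotientMap_prSL.continuous

instance t2Space_PSL2C : T2Space PSL2C := inferInstance

/-! ### The conjugation action on `X_τ` -/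

/-- `X_τ` is a closed subset of `PSL(2,ℂ)` with the point `1` removed. -/
lemma isLocallyClosed_XtauP (t : ℂ) : IsLocallyClosed (XtauP t) := by
  let C : Set PSL2C := {f | ∃ A : SL2C, prSL A = f ∧
    (Matrix.trace (A : Matrix (Fin 2) (Fin 2) ℂ) = t ∨
     Matrix.trace (A : Matrix (Fin 2) (Fin 2) ℂ) = -t)}
  have hC : IsClosed C := by
    rw [← isQuotientMap_prSL.isClosed_preimage]
    have h : prSL ⁻¹' C = {B : SL2C | Matrix.trace (B : Matrix (Fin 2) (Fin 2) ℂ) = t ∨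
        Matrix.trace (B : Matrix (Fin 2) (Fin 2) ℂ) = -t} := by
      ext B
      refine ⟨?_, fun h => ⟨B, rfl, h⟩⟩
      rintro ⟨C, hC, h⟩
      rcases (prSL_eq_iff C B).mp hC with rfl | rfl
      · exact h
      · simp only [Matrix.SpecialLinearGroup.coe_neg, Matrix.trace_neg, neg_inj] at h
        rw [neg_eq_iff_eq_neg] at h
        exact h.symm
    have hc : Continuous fun B : SL2C => Matrix.trace (B : Matrix (Fin 2) (Fin 2) ℂ) :=
      isClosedEmbedding_coe_SL2C.continuous.matrix_trace
    rw [h]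
    exact (isClosed_eq hc continuous_const).union (isClosed_eq hc continuous_const)
  exact (isOpen_compl_singleton (x := (1 : PSL2C))).isLocallyClosed.inter hC.isLocallyClosed

lemma conj_mem_XtauP {t : ℂ} {x : PSL2C} (hx : x ∈ XtauP t) (g : PSL2C) :
    g * x * g⁻¹ ∈ XtauP t := by
  obtain ⟨P, rfl⟩ := prSL_surjective g
  obtain ⟨hx1, A, rfl, hA⟩ := hx
  refine ⟨by simpa [mul_inv_eq_one] using hx1, P * A * P⁻¹, by simp, ?_⟩
  have : Matrix.trace ((P * A * P⁻¹ : SL2C) : Matrix (Fin 2) (Fin 2) ℂ)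
      = Matrix.trace (A : Matrix (Fin 2) (Fin 2) ℂ) := by
    rw [Matrix.SpecialLinearGroup.coe_mul, Matrix.trace_mul_comm,
      ← Matrix.SpecialLinearGroup.coe_mul]
    simp [← mul_assoc]
  rwa [this]

/-- `PSL(2,ℂ)` acts on `X_τ` by conjugation, `g • x = g x g⁻¹`. -/
instance conjActionXtauP (t : ℂ) : MulAction PSL2C (XtauP t) where
  smul g x := ⟨g * x * g⁻¹, conj_mem_XtauP x.2 g⟩
  one_smul x := Subtype.ext (by change 1 * (x : PSL2C) * 1⁻¹ = x; simp)
  mul_smul g h x := Subtype.ext (by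
    change g * h * (x : PSL2C) * (g * h)⁻¹ = g * (h * x * h⁻¹) * g⁻¹
    group)

lemma coe_smul_XtauP {t : ℂ} (g : PSL2C) (x : XtauP t) :
    ((g • x : XtauP t) : PSL2C) = g * x * g⁻¹ := rfl

instance continuousSMul_XtauP (t : ℂ) : ContinuousSMul PSL2C (XtauP t) where
  continuous_smul := by
    refine Continuous.subtype_mk (f := fun p : PSL2C × XtauP t => p.1 * (p.2 : PSL2C) * p.1⁻¹) ?_ _
    fun_prop

/-- The topological core: once the action on `X_τ` is transitive and `H` is the stabilizer of
`x`, the orbit map descends to a homeomorphism, because orbit maps of transitive actions of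
σ-compact groups on Baire spaces are open. -/
lemma exists_homeomorph_of_transitive {t : ℂ} (x : XtauP t) (H : Subgroup PSL2C)
    (htrans : ∀ y : XtauP t, ∃ g : PSL2C, g • x = y)
    (hH : ∀ g : PSL2C, g ∈ H ↔ g • x = x) :
    ∃ F : Quotient (QuotientGroup.rightRel H) ≃ₜ ↥(XtauP t),
      ∀ g : PSL2C, ((F (Quotient.mk (QuotientGroup.rightRel H) g) : PSL2C)
        = g⁻¹ * x * g) := by
  have : MulAction.IsPretransitive PSL2C (XtauP t) := by
    refine ⟨fun y z => ?_⟩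
    obtain ⟨g, rfl⟩ := htrans y
    obtain ⟨h, rfl⟩ := htrans z
    exact ⟨h * g⁻¹, by simp [mul_smul]⟩
  have : LocallyCompactSpace (XtauP t) := (isLocallyClosed_XtauP t).locallyCompactSpace
  let φ : PSL2C → XtauP t := fun g => g⁻¹ • x
  have hφo : IsOpenMap φ :=
    (isOpenMap_smul_of_sigmaCompact x).comp (Homeomorph.inv PSL2C).isOpenMap
  have hφc : Continuous φ := by fun_prop
  have hφ : ∀ a b, QuotientGroup.rightRel H a b ↔ φ a = φ b := by
    intro a b
    rw [QuotientGroup.rightRel_apply, hH, mul_smul, smul_eq_iff_eq_inv_smul, eq_comm]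
  let F₀ : Quotient (QuotientGroup.rightRel H) → XtauP t :=
    Quotient.lift φ fun a b h => (hφ a b).mp h
  have hinj : Function.Injective F₀ := by
    rintro ⟨a⟩ ⟨b⟩ h
    exact Quotient.sound ((hφ a b).mpr h)
  have hsurj : Function.Surjective F₀ := fun y => by
    obtain ⟨g, rfl⟩ := htrans y
    exact ⟨Quotient.mk _ g⁻¹, by simp [F₀, φ]⟩
  have hcont : Continuous F₀ := hφc.quotient_lift _
  have hopen : IsOpenMap F₀ := by
    intro U hU
    have : F₀ '' U = φ '' (Quotient.mk _ ⁻¹' U) := by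
      rw [← Set.image_preimage_eq U Quotient.mk_surjective, ← Set.image_comp,
        Set.image_preimage_eq U Quotient.mk_surjective]
      rfl
    rw [this]
    exact hφo _ (hU.preimage continuous_quotient_mk')
  refine ⟨(Equiv.ofBijective F₀ ⟨hinj, hsurj⟩).toHomeomorphOfContinuousOpen hcont hopen,
    fun g => ?_⟩
  change ((g⁻¹ • x : XtauP t) : PSL2C) = _
  rw [coe_smul_XtauP, inv_inv]

/-! ### Reduction to matrix identities -/

/-- A conjugating matrix of nonzero determinant can be rescaled into `SL(2,ℂ)`, since `ℂ` contains
square roots. -/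
lemma exists_SL2C_conj (A B : SL2C) (P : Matrix (Fin 2) (Fin 2) ℂ) (hP : P.det ≠ 0)
    (h : (A : Matrix (Fin 2) (Fin 2) ℂ) * P = P * (B : Matrix (Fin 2) (Fin 2) ℂ)) :
    ∃ Q : SL2C, A * Q = Q * B := by
  obtain ⟨s, hs⟩ := IsAlgClosed.exists_pow_nat_eq P.det two_pos
  have hs0 : s ≠ 0 := by rintro rfl; exact hP (by rw [← hs]; simp)
  refine ⟨⟨s⁻¹ • P, ?_⟩, Subtype.ext ?_⟩
  · rw [Matrix.det_smul, Fintype.card_fin, ← hs]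
    field_simp
  · change (A : Matrix (Fin 2) (Fin 2) ℂ) * (s⁻¹ • P)
      = (s⁻¹ • P) * (B : Matrix (Fin 2) (Fin 2) ℂ)
    rw [Matrix.mul_smul, Matrix.smul_mul, h]

/-- The theorem for `τ = [t]`, reduced to matrix identities for a representative `A` of `f_τ`:
every nontrivial `B` of trace `t` is conjugate to `A`, and `H` consists of the classes of matrices
commuting with `A` up to sign. -/
lemma exists_homeomorph_of_matrix (t : ℂ) (A : SL2C) (H : Subgroup PSL2C)
    (hA1 : prSL A ≠ 1) (hAt : Matrix.trace (A : Matrix (Fin 2) (Fin 2) ℂ) = t)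
    (hconj : ∀ B : SL2C, Matrix.trace (B : Matrix (Fin 2) (Fin 2) ℂ) = t → B ≠ 1 → B ≠ -1 →
      ∃ P : Matrix (Fin 2) (Fin 2) ℂ, P.det ≠ 0 ∧
        (A : Matrix (Fin 2) (Fin 2) ℂ) * P = P * (B : Matrix (Fin 2) (Fin 2) ℂ))
    (hH : ∀ B : SL2C, prSL B ∈ H ↔ B * A = A * B ∨ B * A = -(A * B)) :
    ∃ F : Quotient (QuotientGroup.rightRel H) ≃ₜ ↥(XtauP t),
      ∀ g : PSL2C, ((F (Quotient.mk (QuotientGroup.rightRel H) g) : PSL2C)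
        = g⁻¹ * prSL A * g) := by
  refine exists_homeomorph_of_transitive ⟨prSL A, hA1, A, rfl, Or.inl hAt⟩ H ?_ ?_
  · rintro ⟨y, hy1, B, rfl, hB⟩
    -- After replacing `B` by `-B` if necessary, the lift has trace exactly `t`.
    obtain ⟨C, hCB, hC⟩ : ∃ C : SL2C, prSL C = prSL B ∧
        Matrix.trace (C : Matrix (Fin 2) (Fin 2) ℂ) = t := by
      rcases hB with hB | hB
      · exact ⟨B, rfl, hB⟩
      · exact ⟨-B, (prSL_eq_iff _ _).mpr (Or.inr rfl), by simp [hB]⟩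
    rw [← hCB, ← map_one prSL, Ne, prSL_eq_iff, not_or] at hy1
    obtain ⟨P, hP, hAP⟩ := hconj C hC hy1.1 hy1.2
    obtain ⟨Q, hQ⟩ := exists_SL2C_conj A C P hP hAP
    refine ⟨(prSL Q)⁻¹, Subtype.ext ?_⟩
    rw [coe_smul_XtauP, inv_inv]
    change (prSL Q)⁻¹ * prSL A * prSL Q = prSL B
    rw [mul_assoc, ← map_mul, hQ, map_mul, inv_mul_cancel_left, hCB]
  · intro g
    obtain ⟨B, rfl⟩ := prSL_surjective g
    rw [hH, ← prSL_eq_iff, Subtype.ext_iff, coe_smul_XtauP, map_mul, map_mul, mul_inv_eq_iff_eq_mul]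

/-! ### The three conjugacy types -/

lemma mul_comm_up_to_sign_iff (A B : SL2C) :
    (B * A = A * B ∨ B * A = -(A * B)) ↔
      ((B : Matrix (Fin 2) (Fin 2) ℂ) * (A : Matrix (Fin 2) (Fin 2) ℂ)
        = (A : Matrix (Fin 2) (Fin 2) ℂ) * (B : Matrix (Fin 2) (Fin 2) ℂ)) ∨
      ((B : Matrix (Fin 2) (Fin 2) ℂ) * (A : Matrix (Fin 2) (Fin 2) ℂ)
        = -((A : Matrix (Fin 2) (Fin 2) ℂ) * (B : Matrix (Fin 2) (Fin 2) ℂ))) := by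
  simp only [← Matrix.SpecialLinearGroup.coe_mul, ← Matrix.SpecialLinearGroup.coe_neg]
  exact or_congr Subtype.ext_iff Subtype.ext_iff

lemma exists_entries (B : SL2C) : ∃ a b c d : ℂ,
    (B : Matrix (Fin 2) (Fin 2) ℂ) = !![a, b; c, d] ∧ a * d - b * c = 1 := by
  refine ⟨B.1 0 0, B.1 0 1, B.1 1 0, B.1 1 1, Matrix.eta_fin_two _, ?_⟩
  rw [← Matrix.det_fin_two]
  exact B.2

/-- Membership of `prSL B` in a subset of `PSL(2,ℂ)` cut out by a matrix condition `p` on some lift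
amounts to `p` holding for one of the two lifts `B`, `-B`. -/
lemma exists_lift_iff (p : Matrix (Fin 2) (Fin 2) ℂ → Prop) (B : SL2C) :
    (∃ C : SL2C, prSL C = prSL B ∧ p C) ↔ p B ∨ p (-(B : Matrix (Fin 2) (Fin 2) ℂ)) := by
  constructor
  · rintro ⟨C, hC, h⟩
    rcases (prSL_eq_iff _ _).mp hC with rfl | rfl
    · exact Or.inl h
    · exact Or.inr (by simpa using h)
  · rintro (h | h)
    · exact ⟨B, rfl, h⟩
    · exact ⟨-B, (prSL_eq_iff _ _).mpr (Or.inr rfl), by simpa using h⟩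

lemma prSL_mem_HparP_iff {A : SL2C} (hA : (A : Matrix (Fin 2) (Fin 2) ℂ) = !![1, 1; 0, 1])
    (B : SL2C) : prSL B ∈ HparP ↔ B * A = A * B ∨ B * A = -(A * B) := by
  obtain ⟨a, b, c, d, hB, hdet⟩ := exists_entries B
  refine (exists_lift_iff (fun M => ∃ v : ℂ, M = !![1, v; 0, 1]) B).trans ?_
  rw [mul_comm_up_to_sign_iff, hA, hB]
  simp
  grind

lemma prSL_mem_HdiagP_iff (B : SL2C) :
    prSL B ∈ HdiagP ↔ B.1 0 1 = 0 ∧ B.1 1 0 = 0 := by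
  obtain ⟨a, b, c, d, hB, hdet⟩ := exists_entries B
  refine (exists_lift_iff (fun M => ∃ μ : ℂ, μ ≠ 0 ∧ M = !![μ, 0; 0, μ⁻¹]) B).trans ?_
  rw [hB]
  simp
  grind

lemma prSL_mem_HzeroP_iff (B : SL2C) :
    prSL B ∈ HzeroP ↔ (B.1 0 1 = 0 ∧ B.1 1 0 = 0) ∨ (B.1 0 0 = 0 ∧ B.1 1 1 = 0) := by
  obtain ⟨a, b, c, d, hB, hdet⟩ := exists_entries B
  refine or_congr (prSL_mem_HdiagP_iff B) ?_
  refine (exists_lift_iff (fun M => ∃ μ : ℂ, μ ≠ 0 ∧ M = !![0, μ; -μ⁻¹, 0]) B).trans ?_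
  rw [hB]
  simp
  grind

/-- The rows of `P` are `r` and `r (B - 1)`, where `r` is a standard basis vector not fixed
by `B`. -/
lemma exists_conj_unipotent {A : SL2C} (hA : (A : Matrix (Fin 2) (Fin 2) ℂ) = !![1, 1; 0, 1])
    (B : SL2C) (hB : Matrix.trace (B : Matrix (Fin 2) (Fin 2) ℂ) = 2) (hB1 : B ≠ 1) :
    ∃ P : Matrix (Fin 2) (Fin 2) ℂ, P.det ≠ 0 ∧
      (A : Matrix (Fin 2) (Fin 2) ℂ) * P = P * (B : Matrix (Fin 2) (Fin 2) ℂ) := by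
  obtain ⟨a, b, c, d, hBe, hdet⟩ := exists_entries B
  have hne : ¬ (a = 1 ∧ b = 0 ∧ c = 0 ∧ d = 1) := by
    rintro ⟨rfl, rfl, rfl, rfl⟩
    exact hB1 (Subtype.ext (by rw [hBe, Matrix.SpecialLinearGroup.coe_one, Matrix.one_fin_two]))
  rw [hBe, Matrix.trace_fin_two_of] at hB
  rw [hA, hBe]
  by_cases hb : b = 0
  · refine ⟨!![0, 1; c, d - 1], ?_, ?_⟩
    · rw [Matrix.det_fin_two_of]
      grind
    · simp
      grind
  · refine ⟨!![1, 0; a - 1, b], ?_, ?_⟩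
    · rw [Matrix.det_fin_two_of]
      grind
    · simp
      grind

/-- The rows of `P` are left eigenvectors of `B` for its distinct eigenvalues `lam` and
`lam⁻¹`. -/
lemma exists_conj_diagonal {lam : ℂ} (h0 : lam ≠ 0) (hlam : lam ≠ lam⁻¹) {A : SL2C}
    (hA : (A : Matrix (Fin 2) (Fin 2) ℂ) = !![lam, 0; 0, lam⁻¹])
    (B : SL2C) (hB : Matrix.trace (B : Matrix (Fin 2) (Fin 2) ℂ) = lam + lam⁻¹) :
    ∃ P : Matrix (Fin 2) (Fin 2) ℂ, P.det ≠ 0 ∧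
      (A : Matrix (Fin 2) (Fin 2) ℂ) * P = P * (B : Matrix (Fin 2) (Fin 2) ℂ) := by
  obtain ⟨a, b, c, d, hBe, hdet⟩ := exists_entries B
  rw [hBe, Matrix.trace_fin_two_of] at hB
  rw [hA, hBe]
  have hm : lam * lam⁻¹ = 1 := mul_inv_cancel₀ h0
  generalize lam⁻¹ = m at *
  by_cases hc : c = 0
  · by_cases hb : b = 0
    · subst hb hc
      have had : (a - lam) * (a - m) = 0 := by grind
      rcases mul_eq_zero.mp had with h | h
      · refine ⟨1, by simp, ?_⟩
        simp
        grind
      · refine ⟨!![0, 1; 1, 0], by simp, ?_⟩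
        simp
        grind
    · refine ⟨!![lam - d, b; m - d, b], ?_, ?_⟩
      · rw [Matrix.det_fin_two_of]
        grind
      · simp
        grind
  · refine ⟨!![c, lam - a; c, m - a], ?_, ?_⟩
    · rw [Matrix.det_fin_two_of]
      grind
    · simp
      grind

lemma prSL_ne_one_of_entry {A : SL2C}
    (h : A.1 0 1 ≠ 0 ∨ A.1 0 0 ≠ A.1 1 1) : prSL A ≠ 1 := by
  rw [← map_one prSL, Ne, prSL_eq_iff]
  rintro (rfl | rfl) <;> simp at h

/-- for every `τ ∈ 𝒯`, the map `F : H_τ\PSL(2,ℂ) → X_τ`,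
`F(H_τ g) = g⁻¹ f_τ g`, is a well-defined homeomorphism, where `H_τ\PSL(2,ℂ)`
carries the quotient topology and `X_τ` the subspace topology. -/
theorem homeomorph_coset_space_to_Xtau :
    (∀ A : SL2C, (A : Matrix (Fin 2) (Fin 2) ℂ) = !![1, 1; 0, 1] →
      ∀ H : Subgroup PSL2C, (H : Set PSL2C) = HparP →
      ∃ F : Quotient (QuotientGroup.rightRel H) ≃ₜ ↥(XtauP 2),
        ∀ g : PSL2C, ((F (Quotient.mk (QuotientGroup.rightRel H) g) : PSL2C)
          = g⁻¹ * prSL A * g)) ∧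
    (∀ t lam : ℂ, t ≠ 2 → t ≠ -2 → t ≠ 0 → lam ≠ 0 → lam + lam⁻¹ = t →
      ∀ A : SL2C, (A : Matrix (Fin 2) (Fin 2) ℂ) = !![lam, 0; 0, lam⁻¹] →
      ∀ H : Subgroup PSL2C, (H : Set PSL2C) = HdiagP →
      ∃ F : Quotient (QuotientGroup.rightRel H) ≃ₜ ↥(XtauP t),
        ∀ g : PSL2C, ((F (Quotient.mk (QuotientGroup.rightRel H) g) : PSL2C)
          = g⁻¹ * prSL A * g)) ∧
    (∀ lam : ℂ, lam ≠ 0 → lam + lam⁻¹ = 0 →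
      ∀ A : SL2C, (A : Matrix (Fin 2) (Fin 2) ℂ) = !![lam, 0; 0, lam⁻¹] →
      ∀ H : Subgroup PSL2C, (H : Set PSL2C) = HzeroP →
      ∃ F : Quotient (QuotientGroup.rightRel H) ≃ₜ ↥(XtauP 0),
        ∀ g : PSL2C, ((F (Quotient.mk (QuotientGroup.rightRel H) g) : PSL2C)
          = g⁻¹ * prSL A * g)) := by
  refine ⟨?_, ?_, ?_⟩
  · intro A hA H hH
    refine exists_homeomorph_of_matrix 2 A H (prSL_ne_one_of_entry (by simp [hA])) ?_
      (fun B hB hB1 _ => exists_conj_unipotent hA B hB hB1) (fun B => ?_)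
    · rw [hA, Matrix.trace_fin_two_of]
      norm_num
    · rw [← SetLike.mem_coe, hH, prSL_mem_HparP_iff hA]
  · rintro t lam ht2 htn2 ht0 h0 rfl A hA H hH
    -- `lam = lam⁻¹` would force `lam = ±1`, that is `t = ±2`.
    have hlam : lam ≠ lam⁻¹ := by
      intro h
      rcases mul_self_eq_one_iff.mp ((mul_eq_one_iff_eq_inv₀ h0).mpr h) with rfl | rfl
      · exact ht2 (by norm_num)
      · exact htn2 (by norm_num)
    refine exists_homeomorph_of_matrix _ A H (prSL_ne_one_of_entry (by simpa [hA] using hlam))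
      (by rw [hA, Matrix.trace_fin_two_of])
      (fun B hB _ _ => exists_conj_diagonal h0 hlam hA B hB) (fun B => ?_)
    rw [← SetLike.mem_coe, hH, prSL_mem_HdiagP_iff, mul_comm_up_to_sign_iff, hA]
    obtain ⟨a, b, c, d, hB, hdet⟩ := exists_entries B
    rw [hB]
    generalize lam⁻¹ = m at *
    simp
    grind
  · intro lam h0 ht A hA H hH
    have hlam : lam ≠ lam⁻¹ := by
      intro h
      rw [← h, ← two_mul] at ht
      exact h0 (by simpa using ht)
    refine exists_homeomorph_of_matrix 0 A H (prSL_ne_one_of_entry (by simpa [hA] using hlam))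
      (by rw [hA, Matrix.trace_fin_two_of, ht])
      (fun B hB _ _ => exists_conj_diagonal h0 hlam hA B (hB.trans ht.symm)) (fun B => ?_)
    rw [← SetLike.mem_coe, hH, prSL_mem_HzeroP_iff, mul_comm_up_to_sign_iff, hA]
    obtain ⟨a, b, c, d, hB, hdet⟩ := exists_entries B
    rw [hB]
    generalize lam⁻¹ = m at *
    simp
    grind
end
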